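/- Let θ ∈ (0, π) with cos θ ∈ ℚ, and write cos θ = s/r with r, s coprime integers and r > 0. Let k and l be positive, squarefree, coprime integers. Then there exist infinitely many positive squarefree integers N such that k·N and l·N are both squarefree and both k·N and l·N are θ-congruent numbers. -/

import Mathlib

/-- A positive squarefree integer `n` is `θ`-congruent (where `cos θ = s / r` with
`r > 0` and `gcd(s, r) = 1`) if `n * r * sin θ` is the area of a triangle with rational
sides and an angle `θ`; equivalently, there are positive rationals `a, b, c` with
`a * b = 2 * n * r` and `c ^ 2 = a ^ 2 + b ^ 2 - 2 * a * b * (s / r)`. -/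
def IsThetaCongruent (r s : ℤ) (n : ℕ) : Prop :=
  ∃ a b c : ℚ, 0 < a ∧ 0 < b ∧ 0 < c ∧
    a * b = 2 * (n : ℚ) * (r : ℚ) ∧
    c ^ 2 = a ^ 2 + b ^ 2 - 2 * a * b * ((s : ℚ) / (r : ℚ))

/-!
A point with `x > 0` on the curve `n * y ^ 2 = f x`, where `f x = x * (x + B) * (x + C)` for
`B = r - s` and `C = 2 * r`, gives a rational triangle showing that `n` is `θ`-congruent. With
`w = (C * u - B) / (C - B * u)`, the values of `f` at `B * w` and `C * w` are `F u` and `u * F u`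
up to squares, where `F` is a cubic polynomial. Hence if `u = k * l * t ^ 2` and `N` is the
squarefree part of `l * F u`, then `k * N` and `l * N` are both `θ`-congruent. Weak approximation
provides a rational `t` for which both points are positive and `l * F u` has even valuation at every
prime dividing `k * l`, so that `N` is coprime to `k * l`, and odd valuation at some prime beyond
any given bound, so that `N` is large.
-/

open scoped Nat
open Polynomial

theorem isThetaCongruent_of_mul_sq_eq_cubic {r s : ℤ} {n : ℕ} (hsr : |s| < r) {x m : ℚ}
    (hx : 0 < x) (hm : m ≠ 0) (h : n * m ^ 2 = x * (x + (r - s)) * (x + 2 * r)) :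
    IsThetaCongruent r s n := by
  have hr : (0 : ℚ) < r := mod_cast (abs_nonneg s).trans_lt hsr
  have hsub : (0 : ℚ) < r - s := sub_pos.2 (mod_cast (abs_lt.1 hsr).2)
  have hadd : (0 : ℚ) < r + s := neg_lt_iff_pos_add'.1 (mod_cast (abs_lt.1 hsr).1)
  have hm' : 0 < |m| := abs_pos.2 hm
  rw [← sq_abs] at h
  refine ⟨x * (x + 2 * r) / |m|, 2 * r * (x + (r - s)) / |m|,
    ((x + (r - s)) ^ 2 + (r + s) * (r - s)) / |m|, by positivity, by positivity, by positivity,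
    ?_, ?_⟩
  · field_simp
    linear_combination -h
  · field_simp
    ring

/-- The polynomial in `u` which gives, up to squares, the values of the cubic
`f x = x * (x + B) * (x + C)` at two related points: for `w = (C * u - B) / (C - B * u)`, they are
`thetaForm B C u` at `B * w` and `u * thetaForm B C u` at `C * w`. Triangles with `cos θ = s / r`
correspond to `B = r - s` and `C = 2 * r`. -/
def thetaForm {R : Type*} [CommRing R] (B C u : R) : R :=
  (B + C) * (1 + u) * (C * u - B) * (C - B * u)

theorem thetaForm_pos {R : Type*} [CommRing R] [LinearOrder R] [IsStrictOrderedRing R] {B C u : R}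
    (hB : 0 < B) (hC : 0 < C) (hu : 0 < u) (h₁ : B < C * u) (h₂ : B * u < C) :
    0 < thetaForm B C u :=
  mul_pos (mul_pos (by positivity) (sub_pos.2 h₁)) (sub_pos.2 h₂)

theorem thetaForm_inv {F : Type*} [Field F] (B C : F) {u : F} (hu : u ≠ 0) :
    thetaForm B C u⁻¹ = thetaForm B C u / u ^ 3 := by
  unfold thetaForm
  field_simp
  ring

section TwoPoints

variable {F : Type*} [Field F] {B C u x : F}

theorem cubic_eq_thetaForm_mul_sq (h : C - B * u ≠ 0)
    (hx : x = B * ((C * u - B) / (C - B * u))) :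
    x * (x + B) * (x + C) = thetaForm B C u * (B * (C - B) / (C - B * u) ^ 2) ^ 2 := by
  subst hx
  unfold thetaForm
  field_simp
  ring

theorem cubic_eq_mul_thetaForm_mul_sq (h : C - B * u ≠ 0)
    (hx : x = C * ((C * u - B) / (C - B * u))) :
    x * (x + B) * (x + C) = u * thetaForm B C u * (C * (C - B) / (C - B * u) ^ 2) ^ 2 := by
  have h' : C - u * B ≠ 0 := by rwa [mul_comm]
  subst hx
  unfold thetaForm
  field_simp
  ring

end TwoPoints

theorem isThetaCongruent_of_mul_sq_eq_thetaForm {r s : ℤ} {n : ℕ} {u m : ℚ} (hsr : |s| < r)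
    (h₁ : r - s < 2 * r * u) (h₂ : (r - s) * u < 2 * r) (hm : m ≠ 0)
    (h : n * m ^ 2 = thetaForm (r - s : ℚ) (2 * r) u) : IsThetaCongruent r s n := by
  have hB : (0 : ℚ) < r - s := sub_pos.2 (mod_cast (abs_lt.1 hsr).2)
  have hBC : (0 : ℚ) < 2 * r - (r - s) := by
    linarith [show (-r : ℚ) < s from mod_cast (abs_lt.1 hsr).1]
  have := sub_pos.2 h₁
  have hden := sub_pos.2 h₂
  refine isThetaCongruent_of_mul_sq_eq_cubic hsr
    (x := (r - s) * ((2 * r * u - (r - s)) / (2 * r - (r - s) * u)))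
    (m := m * ((r - s) * (2 * r - (r - s)) / (2 * r - (r - s) * u) ^ 2))
    (by positivity) (by positivity) ?_
  rw [cubic_eq_thetaForm_mul_sq hden.ne' rfl, mul_pow, ← mul_assoc, h]

theorem isThetaCongruent_of_mul_sq_eq_mul_thetaForm {r s : ℤ} {n : ℕ} {u m : ℚ} (hsr : |s| < r)
    (h₁ : r - s < 2 * r * u) (h₂ : (r - s) * u < 2 * r) (hm : m ≠ 0)
    (h : n * m ^ 2 = u * thetaForm (r - s : ℚ) (2 * r) u) : IsThetaCongruent r s n := by
  have hr : (0 : ℚ) < r := mod_cast (abs_nonneg s).trans_lt hsr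
  have hBC : (0 : ℚ) < 2 * r - (r - s) := by
    linarith [show (-r : ℚ) < s from mod_cast (abs_lt.1 hsr).1]
  have := sub_pos.2 h₁
  have hden := sub_pos.2 h₂
  refine isThetaCongruent_of_mul_sq_eq_cubic hsr
    (x := 2 * r * ((2 * r * u - (r - s)) / (2 * r - (r - s) * u)))
    (m := m * (2 * r * (2 * r - (r - s)) / (2 * r - (r - s) * u) ^ 2))
    (by positivity) (by positivity) ?_
  rw [cubic_eq_mul_thetaForm_mul_sq hden.ne' rfl, mul_pow, ← mul_assoc, h]

theorem exists_forall_absoluteValue_sub_lt {F ι : Type*} [Field F] [Finite ι]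
    {v : ι → AbsoluteValue F ℝ} (hv : ∀ i, (v i).IsNontrivial)
    (hv' : Pairwise fun i j ↦ ¬(v i).IsEquiv (v j)) (a : ι → F) {ε : ι → ℝ} (hε : ∀ i, 0 < ε i) :
    ∃ t : F, ∀ i, v i (t - a i) < ε i := by
  obtain ⟨t, ht⟩ := (AbsoluteValue.denseRange_algebraMap_pi hv hv').exists_mem_open
    (s := Set.univ.pi fun i ↦ Metric.ball (WithAbs.toAbs (v i) (a i)) (ε i))
    (isOpen_set_pi Set.finite_univ fun _ _ ↦ Metric.isOpen_ball)
    ⟨_, fun i _ ↦ Metric.mem_ball_self (hε i)⟩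
  exact ⟨t, fun i ↦ by
    have h := ht i trivial
    rwa [mem_ball_iff_norm] at h⟩

theorem padic_lt_one_iff_dvd {p : ℕ} [Fact p.Prime] (n : ℕ) :
    Rat.AbsoluteValue.padic p n < 1 ↔ p ∣ n := by
  rw [Rat.AbsoluteValue.padic_eq_padicNorm, ← padicNorm.nat_lt_one_iff]
  norm_cast

theorem padic_isNontrivial (p : ℕ) [Fact p.Prime] : (Rat.AbsoluteValue.padic p).IsNontrivial :=
  ⟨p, mod_cast (Fact.out : p.Prime).ne_zero, ((padic_lt_one_iff_dvd p).2 dvd_rfl).ne⟩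

theorem not_padic_isEquiv_padic {p q : ℕ} [Fact p.Prime] [hq : Fact q.Prime] (hpq : p ≠ q) :
    ¬(Rat.AbsoluteValue.padic p).IsEquiv (Rat.AbsoluteValue.padic q) := fun h ↦
  hpq.symm <| (Nat.prime_dvd_prime_iff_eq hq.out Fact.out).1 <|
    (padic_lt_one_iff_dvd p).1 (h.lt_one_iff.1 ((padic_lt_one_iff_dvd p).2 dvd_rfl))

theorem exists_rat_mem_padicNorm_sub_lt {S : Finset ℕ} (hS : ∀ p ∈ S, p.Prime) {U : Set ℝ}
    (hU : IsOpen U) (hU' : U.Nonempty) (a : ℕ → ℚ) {ε : ℕ → ℝ} (hε : ∀ p ∈ S, 0 < ε p) :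
    ∃ t : ℚ, (t : ℝ) ∈ U ∧ ∀ p ∈ S, padicNorm p (t - a p) < ε p := by
  have (p : S) : Fact (p : ℕ).Prime := ⟨hS p p.2⟩
  obtain ⟨x, hx⟩ := Rat.denseRange_cast.exists_mem_open hU hU'
  obtain ⟨δ, hδ, hball⟩ := Metric.isOpen_iff.1 hU x hx
  let v (i : Option S) : AbsoluteValue ℚ ℝ :=
    i.elim Rat.AbsoluteValue.real fun p ↦ Rat.AbsoluteValue.padic p
  have hv : ∀ i, (v i).IsNontrivial
    | none => ⟨2, by simp [v]⟩
    | some p => padic_isNontrivial p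
  have hv' : Pairwise fun i j ↦ ¬(v i).IsEquiv (v j)
    | none, none, h => absurd rfl h
    | none, some q, _ => Rat.AbsoluteValue.not_real_isEquiv_padic q
    | some p, none, _ => fun h ↦ Rat.AbsoluteValue.not_real_isEquiv_padic p h.symm
    | some p, some q, h => not_padic_isEquiv_padic fun hpq ↦ h (congrArg some (Subtype.ext hpq))
  obtain ⟨t, ht⟩ := exists_forall_absoluteValue_sub_lt hv hv'
    (fun i ↦ i.elim x fun p ↦ a p) (ε := fun i ↦ i.elim δ fun p ↦ ε p)
    (Option.forall.2 ⟨hδ, fun p ↦ hε p p.2⟩)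
  refine ⟨t, hball ?_, fun p hp ↦ ht (some ⟨p, hp⟩)⟩
  have hreal : Rat.AbsoluteValue.real (t - x) < δ := ht none
  simpa [Real.dist_eq] using hreal

theorem padicValRat_eq_of_padicNorm_sub_lt {p : ℕ} [hp : Fact p.Prime] {x y : ℚ} (hy : y ≠ 0)
    (h : padicNorm p (x - y) < padicNorm p y) : padicValRat p x = padicValRat p y := by
  have hx : x ≠ 0 := by
    rintro rfl
    simp at h
  have hnorm : ‖(x : ℚ_[p])‖ = ‖(y : ℚ_[p])‖ := by
    refine Padic.norm_eq_of_norm_sub_lt_right ?_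
    rw [← Rat.cast_sub, Padic.eq_padicNorm, Padic.eq_padicNorm]
    exact_mod_cast h
  rw [Padic.eq_padicNorm, Padic.eq_padicNorm, Rat.cast_inj, padicNorm.eq_zpow_of_nonzero hx,
    padicNorm.eq_zpow_of_nonzero hy] at hnorm
  exact neg_injective <|
    zpow_right_injective₀ (mod_cast hp.out.pos) (mod_cast hp.out.ne_one) hnorm

theorem exists_pos_padicValRat_eval_eq_of_padicNorm_sub_lt {p : ℕ} [Fact p.Prime] {f : ℚ[X]}
    {a : ℚ} (ha : f.eval a ≠ 0) :
    ∃ ε : ℝ, 0 < ε ∧ ∀ t : ℚ, padicNorm p (t - a) < ε →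
      padicValRat p (f.eval t) = padicValRat p (f.eval a) := by
  have hcast (t : ℚ) : (f.map (algebraMap ℚ ℚ_[p])).eval (t : ℚ_[p]) = (f.eval t : ℚ) := by
    rw [← eq_ratCast (algebraMap ℚ ℚ_[p]) t, eval_map_apply, eq_ratCast]
  obtain ⟨ε, hε, hclose⟩ := Metric.continuousAt_iff.1
    ((f.map (algebraMap ℚ ℚ_[p])).continuous.continuousAt (x := (a : ℚ_[p])))
    ‖((f.eval a : ℚ) : ℚ_[p])‖ (norm_pos_iff.2 (Rat.cast_ne_zero.2 ha))
  refine ⟨ε, hε, fun t ht ↦ padicValRat_eq_of_padicNorm_sub_lt ha ?_⟩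
  have hval := hclose (x := t) (by rwa [dist_eq_norm, ← Rat.cast_sub, Padic.eq_padicNorm])
  rw [hcast, hcast, dist_eq_norm, ← Rat.cast_sub, Padic.eq_padicNorm, Padic.eq_padicNorm] at hval
  exact_mod_cast hval

theorem exists_rat_padicValRat_eval_eq (f : ℚ[X]) {S : Finset ℕ} (hS : ∀ p ∈ S, p.Prime)
    {a : ℕ → ℚ} (ha : ∀ p ∈ S, f.eval (a p) ≠ 0) {U : Set ℝ} (hU : IsOpen U) (hU' : U.Nonempty) :
    ∃ t : ℚ, (t : ℝ) ∈ U ∧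
      ∀ p ∈ S, padicValRat p (f.eval t) = padicValRat p (f.eval (a p)) := by
  have hlocal (p : ℕ) (hp : p ∈ S) : ∃ ε : ℝ, 0 < ε ∧ ∀ t : ℚ, padicNorm p (t - a p) < ε →
      padicValRat p (f.eval t) = padicValRat p (f.eval (a p)) :=
    have := Fact.mk (hS p hp)
    exists_pos_padicValRat_eval_eq_of_padicNorm_sub_lt (ha p hp)
  choose! ε hε hval using hlocal
  obtain ⟨t, htU, ht⟩ := exists_rat_mem_padicNorm_sub_lt hS hU hU' a hε
  exact ⟨t, htU, fun p hp ↦ hval p hp t (ht p hp)⟩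

theorem exists_rat_padicValRat_mul_thetaForm_eq (c B C K : ℚ) {S : Finset ℕ}
    (hS : ∀ p ∈ S, p.Prime) {a : ℕ → ℚ} (ha : ∀ p ∈ S, c * thetaForm B C (K * a p ^ 2) ≠ 0)
    {U : Set ℝ} (hU : IsOpen U) (hU' : U.Nonempty) :
    ∃ t : ℚ, (t : ℝ) ∈ U ∧ ∀ p ∈ S, padicValRat p (c * thetaForm B C (K * t ^ 2)) =
      padicValRat p (c * thetaForm B C (K * a p ^ 2)) := by
  let f : ℚ[X] := .C c * thetaForm (.C B) (.C C) (.C K * X ^ 2)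
  have heval (t : ℚ) : f.eval t = c * thetaForm B C (K * t ^ 2) := by simp [f, thetaForm]
  simp only [← heval] at ha ⊢
  exact exists_rat_padicValRat_eval_eq f hS ha hU hU'

theorem exists_even_padicValRat_mul_thetaForm {p : ℕ} [Fact p.Prime] {c B C K : ℚ} (hc : c ≠ 0)
    (hB : B ≠ 0) (hC : C ≠ 0) (hBC : B + C ≠ 0) (hK : Odd (padicValRat p K)) :
    ∃ a : ℚ, c * thetaForm B C (K * a ^ 2) ≠ 0 ∧
      Even (padicValRat p (c * thetaForm B C (K * a ^ 2))) := by
  have h0 : c * thetaForm B C (K * 0 ^ 2) ≠ 0 := by simp [thetaForm, *]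
  rcases Int.even_or_odd (padicValRat p (c * thetaForm B C (K * 0 ^ 2))) with hev | hodd
  · exact ⟨0, h0, hev⟩
  -- Replacing `u = K * b ^ 2` by its inverse divides `thetaForm` by `u ^ 3`, whose valuation is
  -- odd: near infinity the parity is opposite to the one near `0`.
  obtain ⟨b, hb, hval⟩ := exists_rat_padicValRat_mul_thetaForm_eq c B C K (S := {p})
    (by simpa using Fact.out) (a := fun _ ↦ 0) (fun _ _ ↦ h0) isOpen_compl_singleton
    ⟨1, one_ne_zero⟩
  have hb0 : b ≠ 0 := by simpa using hb
  have hval' := hval p (Finset.mem_singleton_self p)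
  have hK0 : K ≠ 0 := by rintro rfl; simp at hK
  have hu0 : K * b ^ 2 ≠ 0 := by positivity
  have hFb : c * thetaForm B C (K * b ^ 2) ≠ 0 := fun h ↦ by
    rw [← hval', h, padicValRat.zero] at hodd
    exact Int.not_odd_zero hodd
  have hinv : c * thetaForm B C (K * (K * b)⁻¹ ^ 2) =
      c * thetaForm B C (K * b ^ 2) / (K * b ^ 2) ^ 3 := by
    rw [show K * (K * b)⁻¹ ^ 2 = (K * b ^ 2)⁻¹ by field_simp, thetaForm_inv _ _ hu0, mul_div_assoc]
  refine ⟨(K * b)⁻¹, ?_, ?_⟩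
  · rw [hinv]
    exact div_ne_zero hFb (pow_ne_zero 3 hu0)
  · rw [hinv, padicValRat.div hFb (pow_ne_zero 3 hu0), hval', padicValRat.pow,
      padicValRat.mul hK0 (pow_ne_zero 2 hb0), padicValRat.pow]
    exact hodd.sub_odd (Odd.mul (by decide) (hK.add_even (by simp)))

theorem exists_dvd_not_sq_dvd_one_add_mul_sq {q K z : ℤ} (hq : Prime q) (hqK : ¬q ∣ 2 * K)
    (hz : q ∣ 1 + K * z ^ 2) : ∃ y : ℤ, q ∣ 1 + K * y ^ 2 ∧ ¬q ^ 2 ∣ 1 + K * y ^ 2 := by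
  by_cases hsq : q ^ 2 ∣ 1 + K * z ^ 2
  · have hqz : ¬q ∣ z := fun h ↦ hq.not_dvd_one <|
      (Int.dvd_iff_dvd_of_dvd_add hz).2 ((dvd_pow h two_ne_zero).mul_left K)
    have hexp : 1 + K * (z + q) ^ 2 = 1 + K * z ^ 2 + q * (2 * K * z + q * K) := by ring
    refine ⟨z + q, hexp ▸ hz.add (dvd_mul_right _ _), fun h ↦ ?_⟩
    rw [hexp, dvd_add_right hsq, sq, mul_dvd_mul_iff_left hq.ne_zero,
      dvd_add_left (dvd_mul_right _ _)] at h
    exact (hq.dvd_or_dvd h).elim hqK hqz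
  · exact ⟨z, hz, hsq⟩

theorem exists_prime_gt_dvd_one_add_mul_sq {K : ℤ} (hK : K ≠ 0) (T : ℕ) :
    ∃ q : ℕ, q.Prime ∧ T < q ∧ ∃ z : ℤ, (q : ℤ) ∣ 1 + K * z ^ 2 := by
  obtain ⟨z, hz, hzdvd⟩ : ∃ z : ℤ, 2 ≤ z ∧ ∀ q : ℕ, q.Prime → q ≤ T → (q : ℤ) ∣ z :=
    ⟨((T + 2)! : ℕ), mod_cast (T + 2).self_le_factorial.trans' (by lia), fun q hq hqT ↦
      Int.natCast_dvd_natCast.2 (hq.dvd_factorial.2 (by lia))⟩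
  have hKz : 4 ≤ K * z ^ 2 ∨ 4 ≤ -(K * z ^ 2) := by
    rw [← le_abs, abs_mul, abs_of_nonneg (sq_nonneg z)]
    nlinarith [Int.one_le_abs hK]
  obtain ⟨q, hq, hdvd⟩ := Nat.exists_prime_and_dvd (n := (1 + K * z ^ 2).natAbs) (by lia)
  have hqdvd : (q : ℤ) ∣ 1 + K * z ^ 2 := Int.natCast_dvd.2 hdvd
  refine ⟨q, hq, ?_, z, hqdvd⟩
  by_contra! hle
  exact (Nat.prime_iff_prime_int.1 hq).not_dvd_one <| (Int.dvd_iff_dvd_of_dvd_add hqdvd).2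
    ((dvd_pow (hzdvd q hq hle) two_ne_zero).mul_left K)

theorem padicValInt_eq_one_of_dvd_of_not_sq_dvd {p : ℕ} [Fact p.Prime] {x : ℤ}
    (h : (p : ℤ) ∣ x) (h' : ¬(p : ℤ) ^ 2 ∣ x) : padicValInt p x = 1 := by
  have hx : x ≠ 0 := by rintro rfl; simp at h'
  have h₁ := (padicValInt_dvd_iff 1 x).1 (by simpa using h)
  have h₂ := (padicValInt_dvd_iff 2 x).not.1 (by simpa using h')
  lia

theorem padicValInt_mul_thetaForm_eq_one {q : ℕ} [hq : Fact q.Prime] {c B C u : ℤ}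
    (hc : ¬(q : ℤ) ∣ c * (B + C)) (hu : (q : ℤ) ∣ 1 + u) (hu' : ¬(q : ℤ) ^ 2 ∣ 1 + u) :
    padicValInt q (c * thetaForm B C u) = 1 := by
  have hqZ : Prime (q : ℤ) := Nat.prime_iff_prime_int.1 hq.out
  have h₁ : ¬(q : ℤ) ∣ C * u - B := fun h ↦ hc <| Dvd.dvd.mul_left
    ((by ring : C * (1 + u) - (C * u - B) = B + C) ▸ (hu.mul_left C).sub h) c
  have h₂ : ¬(q : ℤ) ∣ C - B * u := fun h ↦ hc <| Dvd.dvd.mul_left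
    ((by ring : B * (1 + u) + (C - B * u) = B + C) ▸ (hu.mul_left B).add h) c
  have hcof : ¬(q : ℤ) ∣ c * (B + C) * ((C * u - B) * (C - B * u)) :=
    hqZ.not_dvd_mul hc (hqZ.not_dvd_mul h₁ h₂)
  have hfac : c * thetaForm B C u = c * (B + C) * ((C * u - B) * (C - B * u)) * (1 + u) := by
    unfold thetaForm
    ring
  rw [hfac, padicValInt.mul (by rintro h; simp [h] at hcof) (by rintro h; simp [h] at hu'),
    padicValInt.eq_zero_of_not_dvd hcof, padicValInt_eq_one_of_dvd_of_not_sq_dvd hu hu', zero_add]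

theorem exists_prime_gt_odd_padicValRat_mul_thetaForm {c B C K : ℤ} (hc : c ≠ 0)
    (hBC : B + C ≠ 0) (hK : K ≠ 0) (T : ℕ) :
    ∃ q : ℕ, q.Prime ∧ T < q ∧
      ∃ z : ℚ, Odd (padicValRat q (c * thetaForm (B : ℚ) C (K * z ^ 2))) := by
  let d : ℤ := 2 * K * (c * (B + C))
  have hd : d ≠ 0 := by positivity
  obtain ⟨q, hq, hTq, z, hz⟩ := exists_prime_gt_dvd_one_add_mul_sq hK (T + d.natAbs)
  have hqd : ¬(q : ℤ) ∣ d := fun h ↦ by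
    have := Nat.le_of_dvd (Int.natAbs_pos.2 hd) (Int.natCast_dvd.1 h)
    lia
  have := Fact.mk hq
  obtain ⟨y, hy, hy'⟩ := exists_dvd_not_sq_dvd_one_add_mul_sq (Nat.prime_iff_prime_int.1 hq)
    (fun h ↦ hqd (h.mul_right _)) hz
  refine ⟨q, hq, by lia, y, ?_⟩
  have hcast : c * thetaForm (B : ℚ) C (K * (y : ℚ) ^ 2) =
      (c * thetaForm B C (K * y ^ 2) : ℤ) := by
    push_cast [thetaForm]
    rfl
  rw [hcast, padicValRat.of_int,
    padicValInt_mul_thetaForm_eq_one (fun h ↦ hqd (h.mul_left _)) hy hy']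
  decide

theorem exists_squarefree_mul_sq_eq_of_pos {x : ℚ} (hx : 0 < x) :
    ∃ n : ℕ, Squarefree n ∧ ∃ m : ℚ, m ≠ 0 ∧ n * m ^ 2 = x := by
  obtain ⟨n, b, -, hb, hnb, hn⟩ := Nat.sq_mul_squarefree_of_pos
    (Nat.mul_pos (Int.natAbs_pos.2 (Rat.num_pos.2 hx).ne') x.den_pos)
  have hden : (x.den : ℚ) ≠ 0 := mod_cast x.den_ne_zero
  refine ⟨n, hn, b / x.den, div_ne_zero (mod_cast hb.ne') hden, ?_⟩
  have hnb' : (b : ℚ) ^ 2 * n = x.num * x.den := by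
    rw [← abs_of_pos (Rat.num_pos.2 hx), ← Nat.cast_natAbs]
    exact_mod_cast hnb
  conv_rhs => rw [← Rat.num_div_den x]
  field_simp
  linear_combination hnb'

theorem odd_padicValRat_mul_sq_iff_dvd {n p : ℕ} (hn : Squarefree n) (hp : p.Prime) {m : ℚ}
    (hm : m ≠ 0) : Odd (padicValRat p (n * m ^ 2)) ↔ p ∣ n := by
  have := Fact.mk hp
  have hval : padicValRat p (n * m ^ 2) = n.factorization p + 2 * padicValRat p m := by
    rw [padicValRat.mul (mod_cast hn.ne_zero) (pow_ne_zero 2 hm), padicValRat.pow,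
      padicValRat.of_nat, Nat.factorization_def n hp, Nat.cast_ofNat]
  have hle := hn.natFactorization_le_one p
  rw [hval, Int.odd_iff, hp.dvd_iff_one_le_factorization hn.ne_zero]
  lia

theorem exists_squarefree_coprime_dvd_mul_sq_eq {x : ℚ} (hx : 0 < x) {K q : ℕ}
    (heven : ∀ p : ℕ, p.Prime → p ∣ K → Even (padicValRat p x)) (hq : q.Prime)
    (hodd : Odd (padicValRat q x)) :
    ∃ n : ℕ, Squarefree n ∧ K.Coprime n ∧ q ∣ n ∧ ∃ m : ℚ, m ≠ 0 ∧ n * m ^ 2 = x := by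
  obtain ⟨n, hn, m, hm, rfl⟩ := exists_squarefree_mul_sq_eq_of_pos hx
  refine ⟨n, hn, Nat.coprime_of_dvd fun p hp hpK hpn ↦ ?_,
    (odd_padicValRat_mul_sq_iff_dvd hn hq hm).1 hodd, m, hm, rfl⟩
  exact Int.not_even_iff_odd.2 ((odd_padicValRat_mul_sq_iff_dvd hn hp hm).2 hpn) (heven p hp hpK)

theorem exists_rat_even_odd_padicValRat_mul_thetaForm {c B C : ℤ} {K : ℕ} (hc : c ≠ 0)
    (hB : B ≠ 0) (hC : C ≠ 0) (hBC : B + C ≠ 0) (hK : Squarefree K) (T : ℕ) {U : Set ℝ}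
    (hU : IsOpen U) (hU' : U.Nonempty) :
    ∃ t : ℚ, (t : ℝ) ∈ U ∧
      (∀ p : ℕ, p.Prime → p ∣ K →
        Even (padicValRat p (c * thetaForm (B : ℚ) C (K * t ^ 2)))) ∧
      ∃ q : ℕ, q.Prime ∧ T < q ∧
        Odd (padicValRat q (c * thetaForm (B : ℚ) C (K * t ^ 2))) := by
  have heven (p : ℕ) (hp : p ∈ K.primeFactors) : ∃ a : ℚ,
      c * thetaForm (B : ℚ) C (K * a ^ 2) ≠ 0 ∧
        Even (padicValRat p (c * thetaForm (B : ℚ) C (K * a ^ 2))) := by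
    have hp' := Nat.prime_of_mem_primeFactors hp
    have := Fact.mk hp'
    refine exists_even_padicValRat_mul_thetaForm (mod_cast hc) (mod_cast hB) (mod_cast hC)
      (mod_cast hBC) ?_
    simpa using
      (odd_padicValRat_mul_sq_iff_dvd hK hp' one_ne_zero).2 (Nat.dvd_of_mem_primeFactors hp)
  choose! a ha0 ha using heven
  obtain ⟨q, hq, hTq, z, hz⟩ := exists_prime_gt_odd_padicValRat_mul_thetaForm hc hBC
    (K := K) (mod_cast hK.ne_zero) (T + K)
  rw [Int.cast_natCast] at hz
  have hne (p : ℕ) (hp : p ∈ K.primeFactors) : p ≠ q := by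
    have := Nat.le_of_mem_primeFactors hp
    lia
  obtain ⟨t, htU, ht⟩ := exists_rat_padicValRat_mul_thetaForm_eq c B C K
    (S := insert q K.primeFactors) (a := Function.update a q z) (by simp +contextual [hq])
    (by
      simp only [Finset.forall_mem_insert, Function.update_self]
      refine ⟨fun h ↦ by simp [h] at hz, fun p hp ↦ ?_⟩
      rw [Function.update_of_ne (hne p hp)]
      exact ha0 p hp) hU hU'
  simp only [Finset.forall_mem_insert, Function.update_self] at ht
  refine ⟨t, htU, fun p hp hpK ↦ ?_, q, hq, by lia, ht.1 ▸ hz⟩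
  have hpK' := Nat.mem_primeFactors.2 ⟨hp, hpK, hK.ne_zero⟩
  rw [ht.2 p hpK', Function.update_of_ne (hne p hpK')]
  exact ha p hpK'

theorem abs_lt_of_cos_eq_div {θ : ℝ} (hθ0 : 0 < θ) (hθπ : θ < Real.pi) {r s : ℤ} (hr : 0 < r)
    (hcos : Real.cos θ = s / r) : |s| < r := by
  have hr' : (0 : ℝ) < r := mod_cast hr
  have h : |Real.cos θ| < 1 := by
    rw [← sq_lt_one_iff_abs_lt_one, Real.cos_sq', sub_lt_self_iff]
    exact pow_pos (Real.sin_pos_of_pos_of_lt_pi hθ0 hθπ) 2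
  rw [hcos, abs_div, abs_of_pos hr', div_lt_one hr'] at h
  exact_mod_cast h

theorem nonempty_setOf_lt_mul_mul_sq {B C K : ℝ} (hBC : B < C) (hK : 0 < K) :
    {t : ℝ | B < C * (K * t ^ 2) ∧ B * (K * t ^ 2) < C}.Nonempty := by
  refine ⟨√K⁻¹, ?_⟩
  rw [Set.mem_ofPred_eq, Real.sq_sqrt (by positivity), mul_inv_cancel₀ hK.ne', mul_one, mul_one]
  exact ⟨hBC, hBC⟩

theorem exists_rat_lt_even_odd_padicValRat_mul_thetaForm {c B C : ℤ} {K : ℕ} (hc : c ≠ 0)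
    (hB : 0 < B) (hBC : B < C) (hK : Squarefree K) (T : ℕ) :
    ∃ t : ℚ, B < C * (K * t ^ 2) ∧ B * (K * t ^ 2) < C ∧
      (∀ p : ℕ, p.Prime → p ∣ K →
        Even (padicValRat p (c * thetaForm (B : ℚ) C (K * t ^ 2)))) ∧
      ∃ q : ℕ, q.Prime ∧ T < q ∧
        Odd (padicValRat q (c * thetaForm (B : ℚ) C (K * t ^ 2))) := by
  have hopen : IsOpen {t : ℝ | B < C * (K * t ^ 2) ∧ B * (K * t ^ 2) < C} :=
    (isOpen_lt (by fun_prop) (by fun_prop)).and (isOpen_lt (by fun_prop) (by fun_prop))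
  obtain ⟨t, ⟨h₁, h₂⟩, hval⟩ := exists_rat_even_odd_padicValRat_mul_thetaForm hc hB.ne'
    (hB.trans hBC).ne' (add_pos hB (hB.trans hBC)).ne' hK T hopen
    (nonempty_setOf_lt_mul_mul_sq (mod_cast hBC) (mod_cast hK.ne_zero.bot_lt))
  exact ⟨t, mod_cast h₁, mod_cast h₂, hval⟩

theorem exists_gt_isThetaCongruent_mul {r s : ℤ} (hsr : |s| < r) {k l : ℕ}
    (hkl : Squarefree (k * l)) (T : ℕ) :
    ∃ N > T, Squarefree N ∧ (k * l).Coprime N ∧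
      IsThetaCongruent r s (k * N) ∧ IsThetaCongruent r s (l * N) := by
  obtain ⟨hs, hs'⟩ := abs_lt.1 hsr
  have hk : (k : ℚ) ≠ 0 := mod_cast (left_ne_zero_of_mul hkl.ne_zero)
  have hl : (l : ℚ) ≠ 0 := mod_cast (right_ne_zero_of_mul hkl.ne_zero)
  have hB : (0 : ℚ) < r - s := sub_pos.2 (mod_cast hs')
  have hC : (0 : ℚ) < 2 * r := mul_pos two_pos (mod_cast (abs_nonneg s).trans_lt hsr)
  obtain ⟨t, h₁, h₂, heven, q, hq, hTq, hodd⟩ := exists_rat_lt_even_odd_padicValRat_mul_thetaForm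
    (c := l) (B := r - s) (C := 2 * r) (mod_cast hl) (by lia) (by lia) hkl T
  push_cast at h₁ h₂ heven hodd
  have ht : t ≠ 0 := by
    rintro rfl
    simp [hB.not_gt] at h₁
  have hF : 0 < thetaForm (r - s : ℚ) (2 * r) (k * l * t ^ 2) :=
    thetaForm_pos hB hC (by positivity) h₁ h₂
  obtain ⟨N, hN, hcop, hqN, m, hm, hNm⟩ :=
    exists_squarefree_coprime_dvd_mul_sq_eq (mul_pos (by positivity) hF) heven hq hodd
  refine ⟨N, hTq.trans_le (Nat.le_of_dvd hN.ne_zero.bot_lt hqN), hN, hcop,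
    isThetaCongruent_of_mul_sq_eq_mul_thetaForm hsr h₁ h₂ (mul_ne_zero ht hm) ?_,
    isThetaCongruent_of_mul_sq_eq_thetaForm hsr h₁ h₂ (div_ne_zero hm hl) ?_⟩
  · push_cast
    linear_combination k * t ^ 2 * hNm
  · rw [Nat.cast_mul, show (l * N * (m / l) ^ 2 : ℚ) = N * m ^ 2 / l by field_simp, hNm,
      mul_div_cancel_left₀ _ hl]

/-- For `θ ∈ (0, π)` with `cos θ = s / r ∈ ℚ` and `k, l` positive squarefree coprime
integers, there exist infinitely many positive squarefree integers `N` such that `k * N`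
and `l * N` are both squarefree and both are `θ`-congruent numbers. -/
theorem infinitely_many_common_theta_congruent_multipliers
    (θ : ℝ) (hθ0 : 0 < θ) (hθπ : θ < Real.pi)
    (r s : ℤ) (hr : 0 < r) (hrs : Int.gcd s r = 1)
    (hcos : Real.cos θ = (s : ℝ) / (r : ℝ))
    (k l : ℕ) (hk : 0 < k) (hl : 0 < l)
    (hksf : Squarefree k) (hlsf : Squarefree l) (hkl : Nat.Coprime k l) :
    {N : ℕ | 0 < N ∧ Squarefree N ∧ Squarefree (k * N) ∧ Squarefree (l * N) ∧
      IsThetaCongruent r s (k * N) ∧ IsThetaCongruent r s (l * N)}.Infinite := by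
  refine Set.infinite_of_forall_exists_gt fun T ↦ ?_
  obtain ⟨N, hTN, hN, hcop, hkN, hlN⟩ := exists_gt_isThetaCongruent_mul
    (abs_lt_of_cos_eq_div hθ0 hθπ hr hcos) ((Nat.squarefree_mul hkl).2 ⟨hksf, hlsf⟩) T
  exact ⟨N, ⟨by lia, hN, (Nat.squarefree_mul hcop.coprime_mul_right).2 ⟨hksf, hN⟩,
    (Nat.squarefree_mul hcop.coprime_mul_left).2 ⟨hlsf, hN⟩, hkN, hlN⟩, hTN⟩
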